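/- Assume γL² < 1. Let w* ∈ W satisfy the optimality condition ⟨w* − u, ḡ(w*)⟩ ≥ 0 for all u ∈ W, and set σ² := Σ_{s,s'} D(s)·P(s,s')·‖g(w*; s, s')‖₂². Let w ∈ W, let α satisfy 0 < α ≤ (1 − γL²)/(8L³), and for each pair (s, s') let p(s,s') ∈ W be the metric projection of w + α·g(w; s, s') onto W. Then Σ_{s,s'} D(s)·P(s,s')·‖w* − p(s,s')‖₂² ≤ ‖w* − w‖₂² − α·(1/L − γL)·Σ_s D(s)·⟨x(s), w* − w⟩² + 2α²σ². -/

import Mathlib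

open scoped RealInnerProductSpace BigOperators
open Finset

/-- The per-sample TD update
`g(w; s, s') := (f(r(s,s') + γ⟨x(s'), w⟩) − f(⟨x(s), w⟩)) • x(s)`. -/
noncomputable def tdSample {S : Type*} {d : ℕ} (x : S → EuclideanSpace ℝ (Fin d))
    (r : S → S → ℝ) (γ : ℝ) (f : ℝ → ℝ) (w : EuclideanSpace ℝ (Fin d)) (s s' : S) :
    EuclideanSpace ℝ (Fin d) :=
  (f (r s s' + γ * ⟪x s', w⟫) - f ⟪x s, w⟫) • x s

/-- The expected TD update `ḡ(w) := Σ_{s,s'} D(s) P(s,s') g(w; s, s')`. -/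
noncomputable def tdExpected {S : Type*} [Fintype S] {d : ℕ} (D : S → ℝ) (P : S → S → ℝ)
    (x : S → EuclideanSpace ℝ (Fin d)) (r : S → S → ℝ) (γ : ℝ) (f : ℝ → ℝ)
    (w : EuclideanSpace ℝ (Fin d)) : EuclideanSpace ℝ (Fin d) :=
  ∑ s, ∑ s', (D s * P s s') • tdSample x r γ f w s s'

/-!
Put `e = w* - w`, `ξ = ⟨x(s), e⟩`, `η = ⟨x(s'), e⟩` and `V = E[ξ²]`. Along one transition
`g(w) - g(w*)` is `x(s)` times `f(⟨x(s), w*⟩) - f(⟨x(s), w⟩)` minus the increment, from `w` to `w*`,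
of `f` at the bootstrapped target, which is at most `γL|η|` in absolute value. If `f` is
`c`-strongly monotone and `L`-Lipschitz, stationarity in the form `E[η²] = E[ξ²]` therefore gives
`E⟨e, g(w) - g(w*)⟩ ≥ (c - γL) V` and `E‖g(w) - g(w*)‖² ≤ (1 + γ)² L² V`. Expand `‖e - αg(w)‖²` with
`‖g(w)‖² ≤ 2‖g(w) - g(w*)‖² + 2‖g(w*)‖²`: optimality of `w*` gives the term `⟨e, ḡ(w*)⟩` the right
sign, and for `2(1 + γ)² L² α ≤ c - γL` half of the drift absorbs the quadratic term.
Projecting onto `W` only brings the iterate closer to `w*`.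
-/

section Projection

variable {E : Type*} [NormedAddCommGroup E] [InnerProductSpace ℝ E]

lemma norm_sub_le_of_metric_projection {W : Set E} (hW : Convex ℝ W) {v p u : E} (hp : p ∈ W)
    (hproj : ∀ y ∈ W, ‖v - p‖ ≤ ‖v - y‖) (hu : u ∈ W) : ‖u - p‖ ≤ ‖u - v‖ := by
  have : Nonempty W := ⟨⟨p, hp⟩⟩
  have hmin : ‖v - p‖ = ⨅ y : W, ‖v - y‖ :=
    le_antisymm (le_ciInf fun y => hproj y y.2)
      (ciInf_le ⟨0, by rintro _ ⟨y, rfl⟩; exact norm_nonneg _⟩ (⟨p, hp⟩ : W))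
  have hobtuse : ⟪v - p, u - p⟫ ≤ 0 := (norm_eq_iInf_iff_real_inner_le_zero hW hp).1 hmin u hu
  refine (sq_le_sq₀ (norm_nonneg _) (norm_nonneg _)).1 ?_
  calc ‖u - p‖ ^ 2 ≤ ‖u - p‖ ^ 2 - 2 * ⟪u - p, v - p⟫ + ‖v - p‖ ^ 2 := by
        rw [real_inner_comm]
        linarith [sq_nonneg ‖v - p‖]
    _ = ‖u - v‖ ^ 2 := by rw [← norm_sub_sq_real, sub_sub_sub_cancel_right]

end Projection

section StochasticStep

variable {E ι : Type*} [NormedAddCommGroup E] [InnerProductSpace ℝ E] [Fintype ι]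

lemma norm_sub_smul_sq_le (e g h : E) (α : ℝ) :
    ‖e - α • g‖ ^ 2 ≤ ‖e‖ ^ 2 - 2 * α * (⟪e, g - h⟫ + ⟪e, h⟫)
      + 2 * α ^ 2 * (‖g - h‖ ^ 2 + ‖h‖ ^ 2) := by
  have hg : ‖g‖ ^ 2 ≤ 2 * (‖g - h‖ ^ 2 + ‖h‖ ^ 2) :=
    calc ‖g‖ ^ 2 ≤ (‖g - h‖ + ‖h‖) ^ 2 := by gcongr; exact norm_le_norm_sub_add g h
      _ ≤ 2 * (‖g - h‖ ^ 2 + ‖h‖ ^ 2) := add_sq_le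
  calc ‖e - α • g‖ ^ 2 = ‖e‖ ^ 2 - 2 * α * ⟪e, g⟫ + α ^ 2 * ‖g‖ ^ 2 := by
        rw [norm_sub_sq_real, real_inner_smul_right, norm_smul, mul_pow, Real.norm_eq_abs, sq_abs,
          mul_assoc]
    _ ≤ ‖e‖ ^ 2 - 2 * α * ⟪e, g⟫ + α ^ 2 * (2 * (‖g - h‖ ^ 2 + ‖h‖ ^ 2)) := by gcongr
    _ = _ := by rw [inner_sub_right]; ring

lemma sum_mul_norm_sub_smul_sq_le {μ : ι → ℝ} (hμ : ∀ i, 0 ≤ μ i) (hμ1 : ∑ i, μ i = 1)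
    (e : E) (g h : ι → E) (α : ℝ) :
    ∑ i, μ i * ‖e - α • g i‖ ^ 2 ≤
      ‖e‖ ^ 2 - 2 * α * (∑ i, μ i * ⟪e, g i - h i⟫ + ⟪e, ∑ i, μ i • h i⟫)
        + 2 * α ^ 2 * (∑ i, μ i * ‖g i - h i‖ ^ 2 + ∑ i, μ i * ‖h i‖ ^ 2) :=
  calc ∑ i, μ i * ‖e - α • g i‖ ^ 2
      ≤ ∑ i, μ i * (‖e‖ ^ 2 - 2 * α * (⟪e, g i - h i⟫ + ⟪e, h i⟫)
          + 2 * α ^ 2 * (‖g i - h i‖ ^ 2 + ‖h i‖ ^ 2)) := by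
        gcongr with i
        · exact hμ i
        · exact norm_sub_smul_sq_le e (g i) (h i) α
    _ = _ := by
        simp only [mul_add, mul_sub, sum_add_distrib, sum_sub_distrib, mul_left_comm (μ _),
          ← mul_sum, ← sum_mul, hμ1, inner_sum, real_inner_smul_right, one_mul]

end StochasticStep

section TDUpdate

variable {E ι : Type*} [NormedAddCommGroup E] [InnerProductSpace ℝ E] [Fintype ι]
  {f : ℝ → ℝ} {γ c L α : ℝ}

/-- The TD update at `w` along one transition, in terms of its reward `ρ` and of the feature
vectors `a`, `b` of the states it leaves and enters. -/
def tdUpdate (f : ℝ → ℝ) (γ ρ : ℝ) (a b w : E) : E :=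
  (f (ρ + γ * ⟪b, w⟫) - f ⟪a, w⟫) • a

lemma tdUpdate_sub_tdUpdate (f : ℝ → ℝ) (γ ρ : ℝ) (a b v w : E) :
    tdUpdate f γ ρ a b w - tdUpdate f γ ρ a b v =
      ((f ⟪a, v⟫ - f ⟪a, w⟫) - (f (ρ + γ * ⟪b, v⟫) - f (ρ + γ * ⟪b, w⟫))) • a := by
  rw [tdUpdate, tdUpdate, ← sub_smul]
  congr 1
  ring

lemma abs_target_sub_target_le (hγ : 0 ≤ γ) (hupper : ∀ s t, |f s - f t| ≤ L * |s - t|)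
    (ρ : ℝ) (b v w : E) :
    |f (ρ + γ * ⟪b, v⟫) - f (ρ + γ * ⟪b, w⟫)| ≤ L * (γ * |⟪b, v - w⟫|) := by
  simpa only [add_sub_add_left_eq_sub, ← mul_sub, ← inner_sub_right, abs_mul, abs_of_nonneg hγ]
    using hupper (ρ + γ * ⟪b, v⟫) (ρ + γ * ⟪b, w⟫)

lemma le_inner_tdUpdate_sub (hγ : 0 ≤ γ) (hL : 0 ≤ L)
    (hlower : ∀ s t, c * (s - t) ^ 2 ≤ (f s - f t) * (s - t))
    (hupper : ∀ s t, |f s - f t| ≤ L * |s - t|) (ρ : ℝ) (a b v w : E) :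
    c * ⟪a, v - w⟫ ^ 2 - γ * L / 2 * (⟪a, v - w⟫ ^ 2 + ⟪b, v - w⟫ ^ 2) ≤
      ⟪v - w, tdUpdate f γ ρ a b w - tdUpdate f γ ρ a b v⟫ := by
  have hvalue := hlower ⟪a, v⟫ ⟪a, w⟫
  rw [← inner_sub_right] at hvalue
  have htarget : (f (ρ + γ * ⟪b, v⟫) - f (ρ + γ * ⟪b, w⟫)) * ⟪a, v - w⟫ ≤
      γ * L / 2 * (⟪a, v - w⟫ ^ 2 + ⟪b, v - w⟫ ^ 2) :=
    calc (f (ρ + γ * ⟪b, v⟫) - f (ρ + γ * ⟪b, w⟫)) * ⟪a, v - w⟫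
        ≤ |f (ρ + γ * ⟪b, v⟫) - f (ρ + γ * ⟪b, w⟫)| * |⟪a, v - w⟫| :=
          (le_abs_self _).trans_eq (abs_mul _ _)
      _ ≤ L * (γ * |⟪b, v - w⟫|) * |⟪a, v - w⟫| := by
          gcongr
          exact abs_target_sub_target_le hγ hupper ρ b v w
      _ = γ * L / 2 * (2 * |⟪a, v - w⟫| * |⟪b, v - w⟫|) := by ring
      _ ≤ γ * L / 2 * (|⟪a, v - w⟫| ^ 2 + |⟪b, v - w⟫| ^ 2) := by
          gcongr
          exact two_mul_le_add_sq _ _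
      _ = γ * L / 2 * (⟪a, v - w⟫ ^ 2 + ⟪b, v - w⟫ ^ 2) := by rw [sq_abs, sq_abs]
  rw [tdUpdate_sub_tdUpdate, real_inner_smul_right, real_inner_comm a, sub_mul]
  linarith

lemma norm_tdUpdate_sub_sq_le (hγ : 0 ≤ γ) (hupper : ∀ s t, |f s - f t| ≤ L * |s - t|)
    (ρ : ℝ) {a : E} (ha : ‖a‖ ≤ 1) (b v w : E) :
    ‖tdUpdate f γ ρ a b w - tdUpdate f γ ρ a b v‖ ^ 2 ≤
      (1 + γ) * L ^ 2 * (⟪a, v - w⟫ ^ 2 + γ * ⟪b, v - w⟫ ^ 2) := by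
  have hvalue := hupper ⟪a, v⟫ ⟪a, w⟫
  rw [← inner_sub_right] at hvalue
  have hnorm : ‖tdUpdate f γ ρ a b w - tdUpdate f γ ρ a b v‖ ≤
      L * (|⟪a, v - w⟫| + γ * |⟪b, v - w⟫|) :=
    calc ‖tdUpdate f γ ρ a b w - tdUpdate f γ ρ a b v‖
        ≤ |(f ⟪a, v⟫ - f ⟪a, w⟫) - (f (ρ + γ * ⟪b, v⟫) - f (ρ + γ * ⟪b, w⟫))| := by
          rw [tdUpdate_sub_tdUpdate, norm_smul, Real.norm_eq_abs]
          exact mul_le_of_le_one_right (abs_nonneg _) ha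
      _ ≤ |f ⟪a, v⟫ - f ⟪a, w⟫| + |f (ρ + γ * ⟪b, v⟫) - f (ρ + γ * ⟪b, w⟫)| := abs_sub _ _
      _ ≤ L * |⟪a, v - w⟫| + L * (γ * |⟪b, v - w⟫|) :=
          add_le_add hvalue (abs_target_sub_target_le hγ hupper ρ b v w)
      _ = L * (|⟪a, v - w⟫| + γ * |⟪b, v - w⟫|) := by ring
  have hconvex : (|⟪a, v - w⟫| + γ * |⟪b, v - w⟫|) ^ 2 ≤
      (1 + γ) * (|⟪a, v - w⟫| ^ 2 + γ * |⟪b, v - w⟫| ^ 2) := by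
    linarith [mul_nonneg hγ (sq_nonneg (|⟪a, v - w⟫| - |⟪b, v - w⟫|))]
  calc ‖tdUpdate f γ ρ a b w - tdUpdate f γ ρ a b v‖ ^ 2
      ≤ L ^ 2 * (|⟪a, v - w⟫| + γ * |⟪b, v - w⟫|) ^ 2 := by
        rw [← mul_pow]
        gcongr
    _ ≤ L ^ 2 * ((1 + γ) * (|⟪a, v - w⟫| ^ 2 + γ * |⟪b, v - w⟫| ^ 2)) := by gcongr
    _ = (1 + γ) * L ^ 2 * (⟪a, v - w⟫ ^ 2 + γ * ⟪b, v - w⟫ ^ 2) := by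
        rw [sq_abs, sq_abs]
        ring

variable {μ : ι → ℝ} {a b : ι → E} {v w : E}

lemma le_sum_mul_inner_tdUpdate_sub (hμ : ∀ i, 0 ≤ μ i)
    (hab : ∑ i, μ i * ⟪b i, v - w⟫ ^ 2 ≤ ∑ i, μ i * ⟪a i, v - w⟫ ^ 2)
    (hγ : 0 ≤ γ) (hL : 0 ≤ L) (hlower : ∀ s t, c * (s - t) ^ 2 ≤ (f s - f t) * (s - t))
    (hupper : ∀ s t, |f s - f t| ≤ L * |s - t|) (ρ : ι → ℝ) :
    (c - γ * L) * ∑ i, μ i * ⟪a i, v - w⟫ ^ 2 ≤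
      ∑ i, μ i * ⟪v - w, tdUpdate f γ (ρ i) (a i) (b i) w - tdUpdate f γ (ρ i) (a i) (b i) v⟫ :=
  calc (c - γ * L) * ∑ i, μ i * ⟪a i, v - w⟫ ^ 2
      ≤ c * ∑ i, μ i * ⟪a i, v - w⟫ ^ 2
          - γ * L / 2 * (∑ i, μ i * ⟪a i, v - w⟫ ^ 2 + ∑ i, μ i * ⟪b i, v - w⟫ ^ 2) := by
        linarith [mul_le_mul_of_nonneg_left hab (mul_nonneg hγ hL)]
    _ = ∑ i, μ i * (c * ⟪a i, v - w⟫ ^ 2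
          - γ * L / 2 * (⟪a i, v - w⟫ ^ 2 + ⟪b i, v - w⟫ ^ 2)) := by
        simp only [mul_sub, mul_add, sum_sub_distrib, sum_add_distrib, mul_left_comm (μ _), mul_sum]
    _ ≤ _ := by
        gcongr with i
        · exact hμ i
        · exact le_inner_tdUpdate_sub hγ hL hlower hupper (ρ i) (a i) (b i) v w

lemma sum_mul_norm_tdUpdate_sub_sq_le (hμ : ∀ i, 0 ≤ μ i)
    (hab : ∑ i, μ i * ⟪b i, v - w⟫ ^ 2 ≤ ∑ i, μ i * ⟪a i, v - w⟫ ^ 2) (ha : ∀ i, ‖a i‖ ≤ 1)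
    (hγ : 0 ≤ γ) (hupper : ∀ s t, |f s - f t| ≤ L * |s - t|) (ρ : ι → ℝ) :
    ∑ i, μ i * ‖tdUpdate f γ (ρ i) (a i) (b i) w - tdUpdate f γ (ρ i) (a i) (b i) v‖ ^ 2 ≤
      (1 + γ) ^ 2 * L ^ 2 * ∑ i, μ i * ⟪a i, v - w⟫ ^ 2 :=
  calc _ ≤ ∑ i, μ i * ((1 + γ) * L ^ 2 * (⟪a i, v - w⟫ ^ 2 + γ * ⟪b i, v - w⟫ ^ 2)) := by
        gcongr with i
        · exact hμ i
        · exact norm_tdUpdate_sub_sq_le hγ hupper (ρ i) (ha i) (b i) v w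
    _ = (1 + γ) * L ^ 2 *
          (∑ i, μ i * ⟪a i, v - w⟫ ^ 2 + γ * ∑ i, μ i * ⟪b i, v - w⟫ ^ 2) := by
        simp only [mul_add, sum_add_distrib, mul_left_comm (μ _), mul_sum]
    _ ≤ (1 + γ) * L ^ 2 *
          (∑ i, μ i * ⟪a i, v - w⟫ ^ 2 + γ * ∑ i, μ i * ⟪a i, v - w⟫ ^ 2) := by gcongr
    _ = (1 + γ) ^ 2 * L ^ 2 * ∑ i, μ i * ⟪a i, v - w⟫ ^ 2 := by ring

lemma sum_mul_norm_sub_add_smul_tdUpdate_sq_le (hμ : ∀ i, 0 ≤ μ i) (hμ1 : ∑ i, μ i = 1)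
    (hab : ∑ i, μ i * ⟪b i, v - w⟫ ^ 2 ≤ ∑ i, μ i * ⟪a i, v - w⟫ ^ 2) (ha : ∀ i, ‖a i‖ ≤ 1)
    (hγ : 0 ≤ γ) (hL : 0 ≤ L) (hlower : ∀ s t, c * (s - t) ^ 2 ≤ (f s - f t) * (s - t))
    (hupper : ∀ s t, |f s - f t| ≤ L * |s - t|) (ρ : ι → ℝ)
    (hopt : 0 ≤ ⟪v - w, ∑ i, μ i • tdUpdate f γ (ρ i) (a i) (b i) v⟫)
    (hα0 : 0 ≤ α) (hα : 2 * (1 + γ) ^ 2 * L ^ 2 * α ≤ c - γ * L) :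
    ∑ i, μ i * ‖v - (w + α • tdUpdate f γ (ρ i) (a i) (b i) w)‖ ^ 2 ≤
      ‖v - w‖ ^ 2 - α * (c - γ * L) * ∑ i, μ i * ⟪a i, v - w⟫ ^ 2
        + 2 * α ^ 2 * ∑ i, μ i * ‖tdUpdate f γ (ρ i) (a i) (b i) v‖ ^ 2 := by
  set V := ∑ i, μ i * ⟪a i, v - w⟫ ^ 2
  set G := fun (u : E) (i : ι) => tdUpdate f γ (ρ i) (a i) (b i) u
  have hdrift : (c - γ * L) * V ≤ ∑ i, μ i * ⟪v - w, G w i - G v i⟫ :=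
    le_sum_mul_inner_tdUpdate_sub hμ hab hγ hL hlower hupper ρ
  have hnoise : ∑ i, μ i * ‖G w i - G v i‖ ^ 2 ≤ (1 + γ) ^ 2 * L ^ 2 * V :=
    sum_mul_norm_tdUpdate_sub_sq_le hμ hab ha hγ hupper ρ
  have hV : 0 ≤ V := sum_nonneg fun i _ => mul_nonneg (hμ i) (sq_nonneg _)
  have habsorb : α * (2 * (1 + γ) ^ 2 * L ^ 2 * α * V) ≤ α * ((c - γ * L) * V) := by gcongr
  calc ∑ i, μ i * ‖v - (w + α • G w i)‖ ^ 2 = ∑ i, μ i * ‖(v - w) - α • G w i‖ ^ 2 := by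
        simp only [sub_sub]
    _ ≤ ‖v - w‖ ^ 2 - 2 * α * (∑ i, μ i * ⟪v - w, G w i - G v i⟫ + ⟪v - w, ∑ i, μ i • G v i⟫)
          + 2 * α ^ 2 * (∑ i, μ i * ‖G w i - G v i‖ ^ 2 + ∑ i, μ i * ‖G v i‖ ^ 2) :=
        sum_mul_norm_sub_smul_sq_le hμ hμ1 (v - w) (G w) (G v) α
    _ ≤ ‖v - w‖ ^ 2 - 2 * α * ((c - γ * L) * V + 0)
          + 2 * α ^ 2 * ((1 + γ) ^ 2 * L ^ 2 * V + ∑ i, μ i * ‖G v i‖ ^ 2) := by gcongr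
    _ ≤ ‖v - w‖ ^ 2 - α * (c - γ * L) * V + 2 * α ^ 2 * ∑ i, μ i * ‖G v i‖ ^ 2 := by linarith

end TDUpdate

lemma mul_sq_le_of_monotone {f : ℝ → ℝ} (hf : Monotone f) {c s t : ℝ}
    (hlower : c * |s - t| ≤ |f s - f t|) : c * (s - t) ^ 2 ≤ (f s - f t) * (s - t) := by
  have hnonneg : 0 ≤ (f s - f t) * (s - t) := by
    rcases le_total s t with hst | hts
    · exact mul_nonneg_of_nonpos_of_nonpos (sub_nonpos.2 (hf hst)) (sub_nonpos.2 hst)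
    · exact mul_nonneg (sub_nonneg.2 (hf hts)) (sub_nonneg.2 hts)
  calc c * (s - t) ^ 2 = c * |s - t| * |s - t| := by rw [mul_assoc, ← sq, sq_abs]
    _ ≤ |f s - f t| * |s - t| := by gcongr
    _ = (f s - f t) * (s - t) := by rw [← abs_mul, abs_of_nonneg hnonneg]

lemma mul_step_size_le {γ L α : ℝ} (hγ0 : 0 ≤ γ) (hγ1 : γ ≤ 1) (hL : 0 < L) (hα0 : 0 ≤ α)
    (hα : α ≤ (1 - γ * L ^ 2) / (8 * L ^ 3)) :
    2 * (1 + γ) ^ 2 * L ^ 2 * α ≤ 1 / L - γ * L :=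
  calc 2 * (1 + γ) ^ 2 * L ^ 2 * α ≤ 2 * (1 + 1) ^ 2 * L ^ 2 * α := by gcongr
    _ ≤ 2 * (1 + 1) ^ 2 * L ^ 2 * ((1 - γ * L ^ 2) / (8 * L ^ 3)) := by gcongr
    _ = 1 / L - γ * L := by field_simp; ring

section MarkovChain

variable {S : Type*} [Fintype S] {D : S → ℝ} {P : S → S → ℝ}

lemma sum_sum_mul_fst (hP1 : ∀ s, ∑ s', P s s' = 1) (h : S → ℝ) :
    ∑ s, ∑ s', D s * P s s' * h s = ∑ s, D s * h s := by
  simp only [← sum_mul, ← mul_sum, hP1, mul_one]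

lemma sum_sum_mul_snd (hstat : ∀ s', ∑ s, D s * P s s' = D s') (h : S → ℝ) :
    ∑ s, ∑ s', D s * P s s' * h s' = ∑ s, D s * h s := by
  rw [sum_comm]
  simp only [← sum_mul, hstat]

theorem td_sample_update_progress_general {E : Type*} [NormedAddCommGroup E]
    [InnerProductSpace ℝ E] {x : S → E} {r : S → S → ℝ} {γ c L : ℝ} {f : ℝ → ℝ}
    (hD : ∀ s, 0 ≤ D s) (hD1 : ∑ s, D s = 1)
    (hP : ∀ s s', 0 ≤ P s s') (hP1 : ∀ s, ∑ s', P s s' = 1)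
    (hstat : ∀ s', ∑ s, D s * P s s' = D s') (hx : ∀ s, ‖x s‖ ≤ 1)
    (hγ : 0 ≤ γ) (hL : 0 ≤ L) (hlower : ∀ a b, c * (a - b) ^ 2 ≤ (f a - f b) * (a - b))
    (hupper : ∀ a b, |f a - f b| ≤ L * |a - b|)
    {W : Set E} (hW : Convex ℝ W) {wstar : E} (hwstar : wstar ∈ W)
    (hopt : ∀ u ∈ W, 0 ≤ ⟪wstar - u,
      ∑ s, ∑ s', (D s * P s s') • tdUpdate f γ (r s s') (x s) (x s') wstar⟫)
    {w : E} (hw : w ∈ W) {α : ℝ} (hα0 : 0 ≤ α)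
    (hα : 2 * (1 + γ) ^ 2 * L ^ 2 * α ≤ c - γ * L)
    {p : S → S → E} (hpW : ∀ s s', p s s' ∈ W)
    (hproj : ∀ s s', ∀ u ∈ W,
      ‖w + α • tdUpdate f γ (r s s') (x s) (x s') w - p s s'‖ ≤
        ‖w + α • tdUpdate f γ (r s s') (x s) (x s') w - u‖) :
    ∑ s, ∑ s', D s * P s s' * ‖wstar - p s s'‖ ^ 2 ≤
      ‖wstar - w‖ ^ 2 - α * (c - γ * L) * (∑ s, D s * ⟪x s, wstar - w⟫ ^ 2) +
        2 * α ^ 2 * (∑ s, ∑ s', D s * P s s' *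
          ‖tdUpdate f γ (r s s') (x s) (x s') wstar‖ ^ 2) := by
  have hDP : ∀ s s', 0 ≤ D s * P s s' := fun s s' => mul_nonneg (hD s) (hP s s')
  have hDP1 : ∑ s, ∑ s', D s * P s s' = 1 := by simp only [← mul_sum, hP1, mul_one, hD1]
  have hfst := sum_sum_mul_fst (D := D) hP1 fun s => ⟪x s, wstar - w⟫ ^ 2
  have hsnd := sum_sum_mul_snd hstat fun s => ⟪x s, wstar - w⟫ ^ 2
  have hstep := sum_mul_norm_sub_add_smul_tdUpdate_sq_le (ι := S × S)
    (μ := fun z => D z.1 * P z.1 z.2) (a := fun z => x z.1) (b := fun z => x z.2)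
    (v := wstar) (w := w) (fun z => hDP z.1 z.2) (by rwa [Fintype.sum_prod_type])
    (by simp only [Fintype.sum_prod_type, hfst, hsnd, le_refl]) (fun z => hx z.1) hγ hL
    hlower hupper (fun z => r z.1 z.2) (by simpa only [Fintype.sum_prod_type] using hopt w hw)
    hα0 hα
  simp only [Fintype.sum_prod_type, hfst] at hstep
  refine le_trans ?_ hstep
  gcongr with s _ s' _
  · exact hDP s s'
  · exact norm_sub_le_of_metric_projection hW (hpW s s') (hproj s s') hwstar

end MarkovChain

/-- expected one-step progress of the projected sample-based TD update
toward the optimal point `w*`: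
`Σ_{s,s′} D(s)P(s,s′)‖w* − p(s,s′)‖² ≤ ‖w* − w‖² − α(1/L − γL)Σ_s D(s)⟨x(s), w* − w⟩² + 2α²σ²`. -/
theorem td_sample_update_progress {S : Type*} [Fintype S] [Nonempty S] {d : ℕ}
    (D : S → ℝ) (P : S → S → ℝ) (x : S → EuclideanSpace ℝ (Fin d))
    (r : S → S → ℝ) (γ L : ℝ) (f : ℝ → ℝ)
    (hD : ∀ s, 0 ≤ D s) (hD1 : ∑ s, D s = 1)
    (hP : ∀ s s', 0 ≤ P s s') (hP1 : ∀ s, ∑ s', P s s' = 1)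
    (hstat : ∀ s', ∑ s, D s * P s s' = D s')
    (hx : ∀ s, ‖x s‖ ≤ 1)
    (hγ0 : 0 ≤ γ) (hγ1 : γ < 1) (hL : 1 ≤ L)
    (hf : StrictMono f)
    (hfLip : ∀ a b : ℝ, (1 / L) * |a - b| ≤ |f a - f b| ∧ |f a - f b| ≤ L * |a - b|)
    (W : Set (EuclideanSpace ℝ (Fin d)))
    (hWne : W.Nonempty) (hWcpt : IsCompact W) (hWcvx : Convex ℝ W)
    (hγL : γ * L ^ 2 < 1)
    (wstar : EuclideanSpace ℝ (Fin d)) (hwstar : wstar ∈ W)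
    (hopt : ∀ u ∈ W, ⟪wstar - u, tdExpected D P x r γ f wstar⟫ ≥ 0)
    (w : EuclideanSpace ℝ (Fin d)) (hw : w ∈ W)
    (α : ℝ) (hα0 : 0 < α) (hα : α ≤ (1 - γ * L ^ 2) / (8 * L ^ 3))
    (p : S → S → EuclideanSpace ℝ (Fin d)) (hpW : ∀ s s', p s s' ∈ W)
    (hproj : ∀ s s', ∀ u ∈ W,
      ‖w + α • tdSample x r γ f w s s' - p s s'‖ ≤
        ‖w + α • tdSample x r γ f w s s' - u‖) :
    ∑ s, ∑ s', D s * P s s' * ‖wstar - p s s'‖ ^ 2 ≤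
      ‖wstar - w‖ ^ 2 - α * (1 / L - γ * L) * (∑ s, D s * ⟪x s, wstar - w⟫ ^ 2) +
        2 * α ^ 2 * (∑ s, ∑ s', D s * P s s' * ‖tdSample x r γ f wstar s s'‖ ^ 2) := by
  have hmono : ∀ a b, 1 / L * (a - b) ^ 2 ≤ (f a - f b) * (a - b) := fun a b =>
    mul_sq_le_of_monotone hf.monotone (hfLip a b).1
  have hstep := mul_step_size_le hγ0 hγ1.le (zero_lt_one.trans_le hL) hα0.le hα
  exact td_sample_update_progress_general hD hD1 hP hP1 hstat hx hγ0 (zero_le_one.trans hL) hmono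
    (fun a b => (hfLip a b).2) hWcvx hwstar hopt hw hα0.le hstep hpW hproj
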